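/- For every integer n ≥ 3, f(n,0) = n(n−1)·f(n−2,0), where f(C,D) = [s_{(2^C,1^D)}] X_{GN_{C+D,C}} for C, D ≥ 0 and (2^a,1^b) denotes the partition with a parts equal to 2 followed by b parts equal to 1. -/

import Mathlib

open scoped Classical

/-! ### Cells and Young diagrams -/

/-- A cell of a Young diagram: `(row, column)`, both 0-indexed, rows from the top. -/
abbrev Cell : Type := ℕ × ℕ

/-- The length of row `i` (0-indexed from the top) of the Young diagram of the
partition `lam`, whose parts are arranged in weakly decreasing order. -/
def rowLen {N : ℕ} (lam : Nat.Partition N) (i : ℕ) : ℕ :=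
  ((lam.parts.sort (· ≤ ·)).reverse).getD i 0

/-- The Young diagram of a partition, as a set of cells. -/
def diag {N : ℕ} (lam : Nat.Partition N) : Set Cell :=
  {c : Cell | c.2 < rowLen lam c.1}

/-- The number of rows (the length) of a partition. -/
def numRows {N : ℕ} (lam : Nat.Partition N) : ℕ := Multiset.card lam.parts

/-! ### Chromatic symmetric functions and Schur functions, as monomial-coefficient
functions.  A formal power series of bounded degree in the commuting variables
`x_0, x_1, x_2, …` is recorded by the map sending an exponent vector `μ : ℕ → ℕ`
(only finitely many nonzero entries ever matter) to the coefficient of the monomial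
`∏ i, x_i ^ μ i`.  Colors / tableau entries are positive integers, so the variable
`x_0` is never used. -/

/-- A proper coloring of `G` by positive integers. -/
def IsProperColoring {V : Type*} (G : SimpleGraph V) (f : V → ℕ) : Prop :=
  (∀ v, 0 < f v) ∧ ∀ u v, G.Adj u v → f u ≠ f v

/-- The coefficient of the monomial `∏ i, x_i ^ μ i` in the chromatic symmetric
function `X_G = ∑_{proper colorings f} ∏_{v} x_{f v}`. -/
noncomputable def XCoeff {V : Type*} [Fintype V] (G : SimpleGraph V) (μ : ℕ → ℕ) : ℚ :=
  Nat.card {f : V → ℕ //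
    IsProperColoring G f ∧ ∀ i, Nat.card {v : V // f v = i} = μ i}

/-- A semistandard Young tableau of shape `lam`: positive entries on the diagram
(normalized to `0` off the diagram), weakly increasing along rows, strictly
increasing down columns. -/
def IsSSYT {N : ℕ} (lam : Nat.Partition N) (t : Cell → ℕ) : Prop :=
  (∀ c, c ∉ diag lam → t c = 0) ∧ (∀ c ∈ diag lam, 0 < t c) ∧
  (∀ i j : ℕ, ((i, j + 1) : Cell) ∈ diag lam → t (i, j) ≤ t (i, j + 1)) ∧
  (∀ i j : ℕ, ((i + 1, j) : Cell) ∈ diag lam → t (i, j) < t (i + 1, j))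

/-- The coefficient of the monomial `∏ i, x_i ^ μ i` in the Schur function `s_lam`,
i.e. the number of SSYT of shape `lam` and weight `μ`. -/
noncomputable def schurFn {N : ℕ} (lam : Nat.Partition N) (μ : ℕ → ℕ) : ℚ :=
  Nat.card {t : Cell → ℕ // IsSSYT lam t ∧
    ∀ i, Nat.card {c : Cell // c ∈ diag lam ∧ t c = i} = μ i}

/-- The coefficient `[s_lam] f` of the Schur function `s_lam` in the (unique, when it
exists) expansion `f = ∑_{ν ⊢ N} c_ν s_ν` of a symmetric function `f`, homogeneous of
degree `N`, given by its monomial coefficients. -/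
noncomputable def sCoeff {N : ℕ} (f : (ℕ → ℕ) → ℚ) (lam : Nat.Partition N) : ℚ :=
  if h : ∃ c : Nat.Partition N →₀ ℚ, ∀ μ, f μ = c.sum fun ν a => a * schurFn ν μ
  then h.choose lam else 0

/-! ### Graphs: generalized nets, generalized spiders, disjoint unions -/

/-- The generalized net `GN_{n,m}`: the complete graph on the body `Fin n`, with a
pendant (`Sum.inr j`) attached to the anchor `Sum.inl j` for each `j : Fin m`. -/
def genNet (n m : ℕ) : SimpleGraph (Fin n ⊕ Fin m) :=
  SimpleGraph.fromRel fun a b =>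
    match a, b with
    | Sum.inl _, Sum.inl _ => True
    | Sum.inl i, Sum.inr j => (i : ℕ) = (j : ℕ)
    | Sum.inr _, _ => False

/-- The generalized spider `GS_{n,(2,1^{m-1})}`: the complete graph on the body
`Fin n`, a pendant `Sum.inr (Sum.inl j)` attached to the body vertex `Sum.inl j` for
each `j : Fin m`, and one extra vertex `Sum.inr (Sum.inr 0)` (the special pendant)
attached to the pendant `Sum.inr (Sum.inl 0)`, so that the body vertex `0` (the
special anchor) carries an attached path on two vertices. -/
def genSpider2 (n m : ℕ) : SimpleGraph (Fin n ⊕ (Fin m ⊕ Fin 1)) :=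
  SimpleGraph.fromRel fun a b =>
    match a, b with
    | Sum.inl _, Sum.inl _ => True
    | Sum.inl i, Sum.inr (Sum.inl j) => (i : ℕ) = (j : ℕ)
    | Sum.inr (Sum.inl j), Sum.inr (Sum.inr _) => (j : ℕ) = 0
    | _, _ => False

/-- Disjoint union of two simple graphs. -/
def disjUnion {α β : Type*} (G : SimpleGraph α) (H : SimpleGraph β) :
    SimpleGraph (α ⊕ β) :=
  SimpleGraph.fromRel fun a b =>
    match a, b with
    | Sum.inl a, Sum.inl b => G.Adj a b
    | Sum.inr a, Sum.inr b => H.Adj a b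
    | _, _ => False

/-- The one-vertex graph `K_1`. -/
def K1 : SimpleGraph (Fin 1) := ⊥

/-- The path (= complete graph) on two vertices `P_2`. -/
def P2 : SimpleGraph (Fin 2) := ⊤

/-! ### Operations on partitions -/

/-- `removeOnes lam t` is the partition `lam ∖ 1^t` obtained by deleting `t` parts
equal to `1` from `lam` (junk value if `lam` has fewer than `t` parts equal to `1`). -/
def removeOnes {N : ℕ} (lam : Nat.Partition N) (t : ℕ) : Nat.Partition (N - t) :=
  if h : Multiset.replicate t 1 ≤ lam.parts then
    { parts := lam.parts - Multiset.replicate t 1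
      parts_pos := fun hx =>
        lam.parts_pos (Multiset.mem_of_le (tsub_le_self) hx)
      parts_sum := by
        have h1 : (lam.parts - Multiset.replicate t 1) + Multiset.replicate t 1
            = lam.parts := tsub_add_cancel_of_le h
        have h2 := congrArg Multiset.sum h1
        rw [Multiset.sum_add, Multiset.sum_replicate, lam.parts_sum] at h2
        simp only [smul_eq_mul, mul_one] at h2
        omega }
  else Nat.Partition.indiscrete (N - t)

/-- The partition `(2^a, 1^b)` of `2*a + b`. -/
def twoOne (a b : ℕ) : Nat.Partition (2 * a + b) where
  parts := Multiset.replicate a 2 + Multiset.replicate b 1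
  parts_pos := by
    intro i hi
    rw [Multiset.mem_add] at hi
    rcases hi with hi | hi <;> · rw [Multiset.eq_of_mem_replicate hi]; omega
  parts_sum := by
    rw [Multiset.sum_add, Multiset.sum_replicate, Multiset.sum_replicate]
    simp only [smul_eq_mul, mul_one]
    omega

/-! ### Special rim hook `G`-tabloids -/

/-- Two cells are adjacent if they share an edge. -/
def cellAdj (c d : Cell) : Prop :=
  (c.1 = d.1 ∧ (c.2 + 1 = d.2 ∨ d.2 + 1 = c.2)) ∨
  (c.2 = d.2 ∧ (c.1 + 1 = d.1 ∨ d.1 + 1 = c.1))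

/-- A set of cells is (the diagram of) a Young diagram if it is closed under
decreasing either coordinate. -/
def IsYoungDiag (D : Set Cell) : Prop :=
  ∀ i j i' j' : ℕ, ((i, j) : Cell) ∈ D → i' ≤ i → j' ≤ j → ((i', j') : Cell) ∈ D

/-- A set of cells is connected (via edge-adjacency, within the set). -/
def CellConnected (S : Set Cell) : Prop :=
  ∀ c ∈ S, ∀ d ∈ S, Relation.ReflTransGen (fun a b => a ∈ S ∧ b ∈ S ∧ cellAdj a b) c d

/-- A border strip (= rim hook, as a set of cells): nonempty, connected, and
containing no 2×2 square of cells. -/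
def IsBorderStrip (H : Set Cell) : Prop :=
  H.Nonempty ∧ CellConnected H ∧
    ∀ i j : ℕ, ¬(((i, j) : Cell) ∈ H ∧ ((i + 1, j) : Cell) ∈ H ∧
      ((i, j + 1) : Cell) ∈ H ∧ ((i + 1, j + 1) : Cell) ∈ H)

/-- `H` is a rim hook of the Young diagram `D`: a border strip contained in `D`
whose removal leaves a Young diagram. -/
def IsRimHookOf (D H : Set Cell) : Prop :=
  H ⊆ D ∧ IsBorderStrip H ∧ IsYoungDiag (D \ H)

/-- `IsRemovalSeq L D` says that the sets of cells in the list `L` may be removed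
successively from the diagram `D`, each being a rim hook of what remains, with
nothing left at the end. -/
def IsRemovalSeq : List (Set Cell) → Set Cell → Prop
  | [], D => D = ∅
  | H :: L, D => IsRimHookOf D H ∧ IsRemovalSeq L (D \ H)

/-- A special rim hook `G`-tabloid of shape `lam`, with respect to an order `r` on
the vertices of `G`: the cells of the diagram of `lam` are filled bijectively with
the vertices of `G` (vertex `v` goes in cell `pos v`), and the diagram is tiled by
rim hooks, successively removable, each meeting the first column.  The rim hooks are
recorded by the labelling `hk`, which assigns to each vertex the topmost row in which
its rim hook meets the first column.  The vertices in each rim hook form a stable set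
of `G` and, read from the rim hook's (bottom) cell in the first column — i.e. in
increasing order of the diagonal index `column − row` — they increase with respect
to `r`. -/
structure SRHGTabloid {V : Type*} (G : SimpleGraph V) (r : V → V → Prop)
    {N : ℕ} (lam : Nat.Partition N) where
  /-- the cell occupied by each vertex -/
  pos : V → Cell
  /-- the label of the rim hook containing each vertex: the topmost row in which
  that rim hook meets the first column -/
  hk : V → ℕ
  pos_inj : Function.Injective pos
  pos_range : Set.range pos = diag lam
  hk_mem : ∀ v, ((hk v, 0) : Cell) ∈ pos '' {u | hk u = hk v}
  hk_min : ∀ v i, ((i, 0) : Cell) ∈ pos '' {u | hk u = hk v} → hk v ≤ i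
  removal : ∃ L : List ℕ, L.Nodup ∧ (∀ i, i ∈ L ↔ ∃ v, hk v = i) ∧
    IsRemovalSeq (L.map fun i => pos '' {u | hk u = i}) (diag lam)
  stable : ∀ u v, hk u = hk v → u ≠ v → ¬G.Adj u v
  increasing : ∀ u v, hk u = hk v →
    ((pos u).2 : ℤ) - ((pos u).1 : ℤ) < ((pos v).2 : ℤ) - ((pos v).1 : ℤ) → r u v

/-- The sign of a special rim hook `G`-tabloid: `(-1)` to the total number of north
steps, where a rim hook spanning `k` rows contributes `k - 1` north steps. -/
noncomputable def tabSign {V : Type*} {G : SimpleGraph V} {r : V → V → Prop}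
    {N : ℕ} {lam : Nat.Partition N} (T : SRHGTabloid G r lam) : ℤ :=
  (-1) ^ ∑ i ∈ Finset.range N,
    ({a : ℕ | ∃ v, T.hk v = i ∧ (T.pos v).1 = a}.ncard - 1)

/-- The cells of the head of a tabloid of shape `lam`: the rows of length `≥ 2`. -/
def headCells {N : ℕ} (lam : Nat.Partition N) : Set Cell :=
  {c : Cell | c ∈ diag lam ∧ 2 ≤ rowLen lam c.1}

/-- The cells of the tail of a tabloid of shape `lam`: the rows of length `1`. -/
def tailCells {N : ℕ} (lam : Nat.Partition N) : Set Cell :=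
  {c : Cell | c ∈ diag lam ∧ rowLen lam c.1 = 1}

/-- Two special rim hook `G`-tabloids have the same head: the same cells of the head
are occupied by the same vertices, and the rim hook structure restricted to the head
agrees. -/
def SameHead {V : Type*} {G : SimpleGraph V} {r : V → V → Prop} {N : ℕ}
    {lam : Nat.Partition N} (T T' : SRHGTabloid G r lam) : Prop :=
  (∀ v, T.pos v ∈ headCells lam ↔ T'.pos v ∈ headCells lam) ∧
  (∀ v, T.pos v ∈ headCells lam → T.pos v = T'.pos v) ∧
  (∀ u v, T.pos u ∈ headCells lam → T.pos v ∈ headCells lam →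
    (T.hk u = T.hk v ↔ T'.hk u = T'.hk v))

/-- `f(C,D) = [s_{(2^C,1^D)}] X_{GN_{C+D,C}}`. -/
noncomputable def fCD (C D : ℕ) : ℚ :=
  sCoeff (XCoeff (genNet (C + D) C)) (twoOne C D)

/-!
In `n` variables, a proper coloring of `GN_{n,n}` is a permutation of the colors on the body, with
each pendant avoiding the color of its anchor, so `X = n! · ∏ xᵢ · ∏ (p₁ - xᵢ)`. By the bialternant
formula `a_δ s_λ = a_{λ+δ}`, the coefficient of `s_λ` is that of `x^{λ+δ}` in `a_δ X`. For
`λ = (2ⁿ)` the factor `∏ xᵢ` leaves the coefficient of `x^{(1ⁿ)+δ}` in `n! · a_δ ∏ (p₁ - xᵢ)`. In the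
expansion over the sets `T` of factors contributing `p₁`, this is that of `x^{1_T+δ}` in
`a_δ p₁^{|T|}`, up to sign: by antisymmetry it vanishes unless `T` is an initial segment, and then it
is the number `1` of standard tableaux of a column. So `f(n,0) = n! ∑_{k=0}^n (-1)^k`, which is `n!`
for even `n` and `0` for odd `n`.
-/

open MvPolynomial Finset
open scoped Nat

section ExponentFunctions

variable {m : ℕ}

/-- The coefficient of `∏ i, X i ^ e i`, with the exponents given by a plain function. -/
noncomputable def coeffAt (e : Fin m → ℕ) : MvPolynomial (Fin m) ℚ →ₗ[ℚ] ℚ :=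
  lcoeff ℚ (Finsupp.equivFunOnFinite.symm e)

theorem coeff_eq_coeffAt (d : Fin m →₀ ℕ) (P : MvPolynomial (Fin m) ℚ) :
    P.coeff d = coeffAt d P := by
  rw [coeffAt, lcoeff_apply, Finsupp.equivFunOnFinite_symm_coe]

theorem coeffAt_ext {P Q : MvPolynomial (Fin m) ℚ} (h : ∀ e, coeffAt e P = coeffAt e Q) :
    P = Q :=
  MvPolynomial.ext _ _ fun d => by rw [coeff_eq_coeffAt, coeff_eq_coeffAt, h]

theorem coeffAt_prod_X_pow (d e : Fin m → ℕ) :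
    coeffAt d (∏ i, X i ^ e i) = if e = d then 1 else 0 := by
  have monomial_eq_prod : (∏ i, X i ^ e i : MvPolynomial (Fin m) ℚ)
      = monomial (Finsupp.equivFunOnFinite.symm e) 1 := by
    rw [monomial_eq, C_1, one_mul, Finsupp.prod_fintype _ _ fun i => pow_zero _]
    rfl
  rw [monomial_eq_prod, coeffAt, lcoeff_apply, coeff_monomial]
  simp only [EmbeddingLike.apply_eq_iff_eq]

theorem coeffAt_X_mul (e : Fin m → ℕ) (i : Fin m) (P : MvPolynomial (Fin m) ℚ) :
    coeffAt (e + Pi.single i 1) (X i * P) = coeffAt e P := by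
  have : (Finsupp.equivFunOnFinite.symm (e + Pi.single i 1) : Fin m →₀ ℕ)
      = Finsupp.single i 1 + Finsupp.equivFunOnFinite.symm e := by
    ext j
    simp [Finsupp.single_apply, Pi.single_apply, add_comm, eq_comm]
  rw [coeffAt, coeffAt, lcoeff_apply, lcoeff_apply, this, coeff_X_mul]

theorem coeffAt_X_mul_of_eq_zero {e : Fin m → ℕ} {i : Fin m} (h : e i = 0)
    (P : MvPolynomial (Fin m) ℚ) : coeffAt e (X i * P) = 0 := by
  rw [coeffAt, lcoeff_apply, coeff_X_mul', if_neg]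
  simpa using h

theorem coeffAt_rename (σ : Equiv.Perm (Fin m)) (e : Fin m → ℕ) (P : MvPolynomial (Fin m) ℚ) :
    coeffAt e (rename σ P) = coeffAt (e ∘ σ) P := by
  have : (Finsupp.equivFunOnFinite.symm e : Fin m →₀ ℕ)
      = (Finsupp.equivFunOnFinite.symm (e ∘ σ)).mapDomain σ := by
    ext i
    obtain ⟨j, rfl⟩ := σ.surjective i
    rw [Finsupp.mapDomain_apply σ.injective]
    rfl
  rw [coeffAt, lcoeff_apply, this, coeff_rename_mapDomain _ σ.injective]
  rfl

end ExponentFunctions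

section Alternating

variable {m : ℕ}

/-- Polynomials on which a permutation of the variables acts by its sign. -/
def IsAlternating (P : MvPolynomial (Fin m) ℚ) : Prop :=
  ∀ σ : Equiv.Perm (Fin m), rename σ P = ((Equiv.Perm.sign σ : ℤ) : ℚ) • P

variable {P Q : MvPolynomial (Fin m) ℚ}

theorem IsAlternating.mul_isSymmetric (hP : IsAlternating P) (hQ : Q.IsSymmetric) :
    IsAlternating (P * Q) := fun σ => by
  rw [map_mul, hP σ, hQ σ, smul_mul_assoc]

theorem IsAlternating.sum {ι : Type*} {s : Finset ι} {P : ι → MvPolynomial (Fin m) ℚ}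
    (hP : ∀ i ∈ s, IsAlternating (P i)) : IsAlternating (∑ i ∈ s, P i) := fun σ => by
  rw [map_sum, smul_sum]
  exact sum_congr rfl fun i hi => hP i hi σ

theorem IsAlternating.smul (hP : IsAlternating P) (c : ℚ) : IsAlternating (c • P) := fun σ => by
  rw [map_smul, hP σ, smul_comm]

theorem IsAlternating.coeffAt_comp (hP : IsAlternating P) (e : Fin m → ℕ)
    (σ : Equiv.Perm (Fin m)) :
    coeffAt (e ∘ σ) P = (Equiv.Perm.sign σ : ℤ) * coeffAt e P := by
  rw [← coeffAt_rename, hP σ, map_smul, smul_eq_mul]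

theorem IsAlternating.coeffAt_eq_zero (hP : IsAlternating P) {e : Fin m → ℕ} {i j : Fin m}
    (hij : i ≠ j) (he : e i = e j) : coeffAt e P = 0 := by
  have swap_fixes : e ∘ Equiv.swap i j = e := by
    rw [Equiv.comp_swap_eq_update, he, Function.update_eq_self, ← he, Function.update_eq_self]
  have := hP.coeffAt_comp e (Equiv.swap i j)
  rw [swap_fixes, Equiv.Perm.sign_swap hij] at this
  push_cast at this
  linarith

theorem exists_perm_strictAnti_comp {e : Fin m → ℕ} (he : Function.Injective e) :
    ∃ σ : Equiv.Perm (Fin m), StrictAnti (e ∘ σ) := by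
  refine ⟨Tuple.sort (OrderDual.toDual ∘ e), ?_⟩
  have : Monotone (OrderDual.toDual ∘ e ∘ _) := Tuple.monotone_sort (OrderDual.toDual ∘ e)
  exact (show Antitone (e ∘ _) from this).strictAnti_of_injective (he.comp (Equiv.injective _))

theorem IsAlternating.ext (hP : IsAlternating P) (hQ : IsAlternating Q)
    (h : ∀ e, StrictAnti e → coeffAt e P = coeffAt e Q) : P = Q := by
  refine coeffAt_ext fun e => ?_
  by_cases he : Function.Injective e
  · obtain ⟨σ, hσ⟩ := exists_perm_strictAnti_comp he
    have := h _ hσ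
    rwa [hP.coeffAt_comp, hQ.coeffAt_comp,
      mul_right_inj' (by exact_mod_cast (Equiv.Perm.sign σ).ne_zero)] at this
  · obtain ⟨i, j, hij, hne⟩ : ∃ i j, e i = e j ∧ i ≠ j := by
      simpa [Function.Injective] using he
    rw [hP.coeffAt_eq_zero hne hij, hQ.coeffAt_eq_zero hne hij]

/-- The alternant `det (xⱼ ^ eᵢ)`, usually written `a_e`. -/
noncomputable def alternant (e : Fin m → ℕ) : MvPolynomial (Fin m) ℚ :=
  (Matrix.of fun i j => X j ^ e i).det

theorem isAlternating_alternant (e : Fin m → ℕ) : IsAlternating (alternant e) := fun σ => by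
  have rename_entries : (rename σ).mapMatrix (Matrix.of fun i j => (X j : MvPolynomial _ ℚ) ^ e i)
      = (Matrix.of fun i j => (X j : MvPolynomial _ ℚ) ^ e i).submatrix id σ := by
    ext1 i j
    simp
  rw [alternant, AlgHom.map_det, rename_entries, Matrix.det_permute', Algebra.smul_def]
  simp

theorem coeffAt_alternant (d e : Fin m → ℕ) :
    coeffAt d (alternant e)
      = ∑ σ : Equiv.Perm (Fin m), if e ∘ σ = d then ((Equiv.Perm.sign σ : ℤ) : ℚ) else 0 := by
  rw [alternant, Matrix.det_apply', map_sum]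
  refine sum_congr rfl fun σ _ => ?_
  have : ((Equiv.Perm.sign σ : ℤ) : MvPolynomial (Fin m) ℚ) * ∏ i, X i ^ e (σ i)
      = ((Equiv.Perm.sign σ : ℤ) : ℚ) • ∏ i, X i ^ (e ∘ σ) i := by
    simp [Algebra.smul_def]
  simp only [Matrix.of_apply]
  rw [this, map_smul, coeffAt_prod_X_pow, smul_eq_mul, mul_ite, mul_one, mul_zero]

theorem coeffAt_alternant_of_strictAnti {d e : Fin m → ℕ} (hd : StrictAnti d)
    (he : StrictAnti e) : coeffAt d (alternant e) = if e = d then 1 else 0 := by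
  have perm_eq_one {σ : Equiv.Perm (Fin m)} (h : e ∘ σ = d) : σ = 1 := by
    refine σ.monotone_iff.mp fun i j hij => ?_
    rw [← he.le_iff_ge]
    have := hd.antitone hij
    rwa [← h] at this
  rw [coeffAt_alternant, sum_eq_single 1]
  · simp
  · exact fun σ _ hσ => if_neg fun h => hσ (perm_eq_one h)
  · simp

/-- The exponents `m - 1, …, 1, 0`, usually written `δ`. -/
def staircase (m : ℕ) (i : Fin m) : ℕ := i.rev

theorem strictAnti_staircase : StrictAnti (staircase m) := fun _ _ h => Fin.rev_strictAnti h

theorem alternant_staircase_ne_zero : alternant (staircase m) ≠ 0 := fun h => by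
  have := coeffAt_alternant_of_strictAnti (strictAnti_staircase (m := m)) strictAnti_staircase
  simp [h] at this

end Alternating

section Branching

theorem det_eq_of_forall_row_eq_smul_add_succ {R : Type*} [CommRing R] {m : ℕ}
    {A B : Matrix (Fin (m + 1)) (Fin (m + 1)) R} (c : Fin m → R)
    (A_last : ∀ j, A (Fin.last m) j = B (Fin.last m) j)
    (A_castSucc : ∀ (i : Fin m) (j), A i.castSucc j = B i.castSucc j + c i * A i.succ j) :
    A.det = B.det := by
  rw [← A.det_submatrix_equiv_self Fin.revPerm, ← B.det_submatrix_equiv_self Fin.revPerm]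
  refine Matrix.det_eq_of_forall_row_eq_smul_add_pred (fun i => c i.rev) (fun j => ?_)
    fun i j => ?_
  · simpa using A_last j.rev
  · simpa [Fin.rev_succ, Fin.rev_castSucc] using A_castSucc i.rev j.rev

theorem det_eq_mul_det_submatrix_castSucc {R : Type*} [CommRing R] {m : ℕ}
    (A : Matrix (Fin (m + 1)) (Fin (m + 1)) R) (h : ∀ i : Fin m, A i.castSucc (Fin.last m) = 0) :
    A.det = A (Fin.last m) (Fin.last m) * (A.submatrix Fin.castSucc Fin.castSucc).det := by
  rw [A.det_succ_column (Fin.last m), Fin.sum_univ_castSucc]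
  simp [h, Fin.succAbove_last]

theorem det_sum_row {R ι κ : Type*} [CommRing R] [Fintype ι] [DecidableEq ι]
    (s : ι → Finset κ) (c : ι → κ → R) (g : ι → κ → ι → R) :
    (Matrix.of fun i j => ∑ k ∈ s i, c i k * g i k j).det
      = ∑ k ∈ Fintype.piFinset s, (∏ i, c i (k i)) * (Matrix.of fun i j => g i (k i) j).det := by
  have rows : (Matrix.of fun i j => ∑ k ∈ s i, c i k * g i k j)
      = fun i => ∑ k ∈ s i, c i k • g i k := by
    ext i j
    simp [Finset.sum_apply]
  rw [rows]
  refine (Matrix.detRowAlternating.toMultilinearMap.map_sum_finset _ s).trans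
    (sum_congr rfl fun k _ => ?_)
  exact MultilinearMap.map_smul_univ _ _ _

theorem pow_sub_pow_mul_pow_eq_sub_mul_sum {R : Type*} [CommRing R] (x y : R) {p q : ℕ}
    (h : q ≤ p) :
    x ^ (p + 1) - y ^ (p + 1 - q) * x ^ q = (x - y) * ∑ k ∈ Icc q p, y ^ (p - k) * x ^ k := by
  obtain ⟨d, rfl⟩ := Nat.exists_eq_add_of_le h
  have shift : ∑ k ∈ Icc q (q + d), y ^ (q + d - k) * x ^ k
      = x ^ q * ∑ k ∈ range (d + 1), x ^ k * y ^ (d - k) := by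
    rw [← Ico_add_one_right_eq_Icc, sum_Ico_eq_sum_range, mul_sum]
    refine sum_congr (by congr 1; omega) fun k _ => ?_
    rw [show q + d - (q + k) = d - k by omega, pow_add]
    ring
  have geom := (Commute.all x y).mul_geom_sum₂ (d + 1)
  simp only [Nat.add_sub_cancel] at geom
  rw [shift, mul_left_comm, geom, show q + d + 1 - q = d + 1 by omega]
  ring

variable {m : ℕ}

/-- The sequences `k` with `a 0 ≥ k 0 ≥ a 1 ≥ k 1 ≥ ⋯ ≥ k (m - 1) ≥ a m`: the row lengths left
after the largest entries are removed from a tableau with row lengths `a`. -/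
def interlacing (a : Fin (m + 1) → ℕ) : Finset (Fin m → ℕ) :=
  Fintype.piFinset fun i => Icc (a i.succ) (a i.castSucc)

theorem mem_interlacing {a : Fin (m + 1) → ℕ} {k : Fin m → ℕ} :
    k ∈ interlacing a ↔ ∀ i : Fin m, a i.succ ≤ k i ∧ k i ≤ a i.castSucc := by
  simp only [interlacing, Fintype.mem_piFinset, mem_Icc]

theorem rename_castSucc_alternant (e : Fin m → ℕ) :
    rename Fin.castSucc (alternant e)
      = (Matrix.of fun i j : Fin m => (X j.castSucc : MvPolynomial (Fin (m + 1)) ℚ) ^ e i).det := by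
  rw [alternant, AlgHom.map_det]
  congr 1
  ext1 i j
  simp

theorem sum_sub_of_mem_interlacing {a : Fin (m + 1) → ℕ} {k : Fin m → ℕ}
    (hk : k ∈ interlacing a) :
    a (Fin.last m) + ∑ i : Fin m, (a i.castSucc - k i) = ∑ i, a i - ∑ i, k i := by
  have := sum_le_sum fun i (_ : i ∈ univ) => (mem_interlacing.mp hk i).2
  rw [Fin.sum_univ_castSucc, sum_tsub_distrib _ fun i _ => (mem_interlacing.mp hk i).2]
  omega

/-- Subtracting from each row a multiple of the next one clears the last column and leaves in the
other rows the complete sums `∑ xᵏ yᵖ⁻ᵏ`, where `y` is the last variable. -/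
theorem alternant_add_staircase_succ {a : Fin (m + 1) → ℕ} (ha : Antitone a) :
    alternant (a + staircase (m + 1))
      = (∏ j : Fin m, (X j.castSucc - X (Fin.last m))) *
        ∑ k ∈ interlacing a, rename Fin.castSucc (alternant (k + staircase m)) *
          X (Fin.last m) ^ (∑ i, a i - ∑ i, k i) := by
  set y : MvPolynomial (Fin (m + 1)) ℚ := X (Fin.last m) with hy
  have ha' (i : Fin m) : a i.succ ≤ a i.castSucc := ha i.castSucc_lt_succ.le
  let reduced : Matrix (Fin (m + 1)) (Fin (m + 1)) (MvPolynomial (Fin (m + 1)) ℚ) :=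
    Matrix.of (Fin.snoc (fun i j => (X j - y) * ∑ k ∈ Icc (a i.succ) (a i.castSucc),
      y ^ (a i.castSucc - k) * X j ^ (k + staircase m i)) fun j => X j ^ a (Fin.last m))
  have det_reduced : alternant (a + staircase (m + 1)) = reduced.det := by
    refine det_eq_of_forall_row_eq_smul_add_succ
      (fun i => y ^ (a i.castSucc + 1 - a i.succ)) (fun j => ?_) fun i j => ?_
    · simp [reduced, staircase]
    · have := pow_sub_pow_mul_pow_eq_sub_mul_sum (X j) y (ha' i)
      have hs : staircase (m + 1) i.castSucc = staircase m i + 1 := by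
        simp only [staircase, Fin.val_rev, Fin.val_castSucc]; omega
      have hs' : staircase (m + 1) i.succ = staircase m i := by
        simp only [staircase, Fin.val_rev, Fin.val_succ]; omega
      simp only [reduced, Matrix.of_apply, Fin.snoc_castSucc, Pi.add_apply, hs, hs', pow_add,
        ← mul_assoc, ← sum_mul]
      rw [← this]
      ring
  have last_column (i : Fin m) : reduced i.castSucc (Fin.last m) = 0 := by
    simp [reduced, hy]
  have minor : (reduced.submatrix Fin.castSucc Fin.castSucc).det
      = (∏ j : Fin m, (X j.castSucc - y)) * ∑ k ∈ interlacing a,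
        (∏ i, y ^ (a i.castSucc - k i)) * rename Fin.castSucc (alternant (k + staircase m)) := by
    simp only [rename_castSucc_alternant, interlacing, Pi.add_apply]
    rw [← det_sum_row _ (fun i k => y ^ (a i.castSucc - k))
      fun i k (j : Fin m) => X j.castSucc ^ (k + staircase m i), ← Matrix.det_mul_row]
    congr 1
    ext1 i j
    simp [reduced]
  rw [det_reduced, det_eq_mul_det_submatrix_castSucc _ last_column, minor, mul_left_comm, mul_sum]
  congr 1
  refine sum_congr rfl fun k hk => ?_
  rw [prod_pow_eq_pow_sum, ← sum_sub_of_mem_interlacing hk, pow_add]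
  simp only [reduced, Matrix.of_apply, Fin.snoc_last, ← hy]
  ring

end Branching

section Tableaux

variable {m : ℕ}

/-- The sequence `a` continued by zeros: the row lengths of a Young diagram with at most `m`
rows. -/
def extendZero (a : Fin m → ℕ) (i : ℕ) : ℕ := if h : i < m then a ⟨i, h⟩ else 0

@[simp]
theorem extendZero_val (a : Fin m → ℕ) (i : Fin m) : extendZero a i = a i := dif_pos i.isLt

theorem extendZero_of_le (a : Fin m → ℕ) {i : ℕ} (h : m ≤ i) : extendZero a i = 0 :=
  dif_neg h.not_gt

theorem extendZero_injective : Function.Injective (extendZero (m := m)) := fun a b h =>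
  funext fun i => by simpa using congrFun h i

theorem antitone_extendZero {a : Fin m → ℕ} (ha : Antitone a) : Antitone (extendZero a) :=
  fun i j hij => by
    by_cases hj : j < m
    · simpa [extendZero, hj, hij.trans_lt hj] using ha (Fin.mk_le_mk.mpr hij)
    · simp [extendZero_of_le a (not_lt.mp hj)]

theorem mem_interlacing_iff_extendZero {a : Fin (m + 1) → ℕ} {k : Fin m → ℕ} :
    k ∈ interlacing a
      ↔ ∀ i, extendZero a (i + 1) ≤ extendZero k i ∧ extendZero k i ≤ extendZero a i := by
  rw [mem_interlacing]
  refine ⟨fun h i => ?_, fun h i => ?_⟩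
  · by_cases hi : i < m
    · simpa [extendZero, hi, hi.trans m.lt_succ_self] using h ⟨i, hi⟩
    · simp [extendZero_of_le k (not_lt.mp hi),
        extendZero_of_le a (Nat.succ_le_succ (not_lt.mp hi))]
  · have := h i
    rwa [extendZero_val, ← Fin.val_succ, extendZero_val, ← Fin.val_castSucc, extendZero_val] at this

theorem antitone_of_mem_interlacing {a : Fin (m + 1) → ℕ} {k : Fin m → ℕ}
    (hk : k ∈ interlacing a) : Antitone k := fun i j hij => by
  rw [← extendZero_val k i, ← extendZero_val k j]
  exact antitone_nat_of_succ_le (fun n => (mem_interlacing_iff_extendZero.mp hk (n + 1)).2.trans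
    (mem_interlacing_iff_extendZero.mp hk n).1) hij

/-- The Young diagram with row lengths `a`. -/
def cells (a : Fin m → ℕ) : Finset Cell :=
  ((univ : Finset (Fin m)).sigma fun i => range (a i)).map
    ⟨fun c => (c.1, c.2), by rintro ⟨i, j⟩ ⟨i', j'⟩ h; simp_all [Fin.ext_iff]⟩

theorem mem_cells {a : Fin m → ℕ} {c : Cell} : c ∈ cells a ↔ c.2 < extendZero a c.1 := by
  obtain ⟨i, j⟩ := c
  simp only [cells, mem_map, mem_sigma, mem_univ, true_and, mem_range]
  refine ⟨?_, fun h => ?_⟩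
  · rintro ⟨⟨i, j⟩, h, ⟨⟩⟩
    rwa [extendZero_val]
  · have hi : i < m := by
      by_contra hi
      simp [extendZero_of_le a (not_lt.mp hi)] at h
    exact ⟨⟨⟨i, hi⟩, j⟩, by simpa [extendZero, hi] using h, rfl⟩

theorem card_cells (a : Fin m → ℕ) : #(cells a) = ∑ i, a i := by
  simp [cells]

theorem left_mem_cells {a : Fin m → ℕ} {i j : ℕ} (h : (i, j + 1) ∈ cells a) :
    (i, j) ∈ cells a :=
  mem_cells.mpr (j.lt_succ_self.trans (mem_cells.mp h))

theorem above_mem_cells {a : Fin m → ℕ} (ha : Antitone a) {i j : ℕ} (h : (i + 1, j) ∈ cells a) :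
    (i, j) ∈ cells a :=
  mem_cells.mpr ((mem_cells.mp h).trans_le (antitone_extendZero ha i.le_succ))

theorem cells_subset_of_mem_interlacing {a : Fin (m + 1) → ℕ} {k : Fin m → ℕ}
    (hk : k ∈ interlacing a) : cells k ⊆ cells a := fun c hc =>
  mem_cells.mpr ((mem_cells.mp hc).trans_le (mem_interlacing_iff_extendZero.mp hk c.1).2)

theorem above_mem_cells_of_mem_interlacing {a : Fin (m + 1) → ℕ} {k : Fin m → ℕ}
    (hk : k ∈ interlacing a) {i j : ℕ} (h : (i + 1, j) ∈ cells a) : (i, j) ∈ cells k :=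
  mem_cells.mpr ((mem_cells.mp h).trans_le (mem_interlacing_iff_extendZero.mp hk i).1)

theorem extendZero_le_of_cells_subset {m' : ℕ} {a : Fin m → ℕ} {b : Fin m' → ℕ} {i i' : ℕ}
    (h : ∀ j, (i, j) ∈ cells a → (i', j) ∈ cells b) : extendZero a i ≤ extendZero b i' :=
  le_of_forall_lt fun _ hj => mem_cells.mp (h _ (mem_cells.mpr hj))

theorem cells_injective : Function.Injective (cells (m := m)) := fun _ _ h =>
  extendZero_injective <| funext fun _ => le_antisymm
    (extendZero_le_of_cells_subset fun _ hj => h ▸ hj)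
    (extendZero_le_of_cells_subset fun _ hj => h ▸ hj)

/-- Semistandard tableaux with row lengths `a` and entries in `{1, …, m}`, normalized to `0` off
the diagram. -/
structure IsTableau (a : Fin m → ℕ) (t : Cell → ℕ) : Prop where
  eq_zero : ∀ c ∉ cells a, t c = 0
  pos : ∀ c ∈ cells a, 0 < t c
  le : ∀ c ∈ cells a, t c ≤ m
  row_le : ∀ i j, (i, j + 1) ∈ cells a → t (i, j) ≤ t (i, j + 1)
  col_lt : ∀ i j, (i + 1, j) ∈ cells a → t (i, j) < t (i + 1, j)

theorem IsTableau.row_lt {a : Fin m → ℕ} {t : Cell → ℕ} (ht : IsTableau a t) (ha : Antitone a) :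
    ∀ {i j : ℕ}, (i, j) ∈ cells a → i < t (i, j)
  | 0, _, h => ht.pos _ h
  | _ + 1, _, h =>
    (Nat.succ_le_of_lt (ht.row_lt ha (above_mem_cells ha h))).trans_lt (ht.col_lt _ _ h)

theorem finite_setOf_isTableau (a : Fin m → ℕ) : {t | IsTableau a t}.Finite := by
  refine Set.Finite.of_injOn (f := fun t (c : cells a) => t c)
    (t := {f | ∀ c : cells a, f c ∈ Set.Iic m})
    (fun t ht c => IsTableau.le ht c.1 c.2) (fun t ht t' ht' h => ?_)
    (Set.Finite.pi' fun _ => Set.finite_Iic m)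
  ext c
  by_cases hc : c ∈ cells a
  · exact congrFun h ⟨c, hc⟩
  · rw [IsTableau.eq_zero ht c hc, IsTableau.eq_zero ht' c hc]

/-- The finitely many semistandard tableaux with row lengths `a` and entries in `{1, …, m}`. -/
noncomputable def tableaux (a : Fin m → ℕ) : Finset (Cell → ℕ) :=
  (finite_setOf_isTableau a).toFinset

theorem mem_tableaux {a : Fin m → ℕ} {t : Cell → ℕ} : t ∈ tableaux a ↔ IsTableau a t :=
  Set.Finite.mem_toFinset _

/-- The number of entries `i + 1` of a tableau: the variable `X i` stands for the entry `i + 1`. -/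
def tableauWeight (a : Fin m → ℕ) (t : Cell → ℕ) (i : Fin m) : ℕ :=
  #{c ∈ cells a | t c = i + 1}

theorem IsTableau.row_mono {a : Fin m → ℕ} {t : Cell → ℕ} (ht : IsTableau a t) {i j j' : ℕ}
    (hj : j ≤ j') (h : (i, j') ∈ cells a) : t (i, j) ≤ t (i, j') := by
  induction hj with
  | refl => exact le_rfl
  | step _ ih => exact (ih (left_mem_cells h)).trans (ht.row_le _ _ h)

/-- The row lengths of the entries at most `m` of a tableau. -/
def sublevelShape (a : Fin (m + 1) → ℕ) (t : Cell → ℕ) (i : Fin m) : ℕ :=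
  #{j : Fin (a i.castSucc) | t (i, j) ≤ m}

variable {a : Fin (m + 1) → ℕ} {k : Fin m → ℕ} {t : Cell → ℕ}

theorem IsTableau.mem_cells_sublevelShape (ht : IsTableau a t) (ha : Antitone a) {c : Cell} :
    c ∈ cells (sublevelShape a t) ↔ c ∈ cells a ∧ t c ≤ m := by
  obtain ⟨i, j⟩ := c
  by_cases hi : i < m
  · have hai : extendZero a i = a (Fin.castSucc ⟨i, hi⟩) := extendZero_val a (Fin.castSucc ⟨i, hi⟩)
    have hk : extendZero (sublevelShape a t) i = sublevelShape a t ⟨i, hi⟩ := dif_pos hi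
    rw [mem_cells, mem_cells, hai, hk, sublevelShape]
    by_cases hj : j < a (Fin.castSucc ⟨i, hi⟩)
    · rw [Fin.lt_card_filter_univ_iff_apply_of_imp (j := ⟨j, hj⟩) fun j : Fin _ => t (i, j) ≤ m]
      · exact (and_iff_right hj).symm
      · exact fun j j' hj' => (ht.row_mono hj' (mem_cells.mpr (j.isLt.trans_eq hai.symm))).trans
    · refine iff_of_false (fun h => hj (h.trans_le ?_)) fun h => hj h.1
      exact (card_le_univ _).trans_eq (Fintype.card_fin _)
  · refine iff_of_false (fun h => ?_) fun h => ?_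
    · simp [mem_cells, extendZero_of_le _ (not_lt.mp hi)] at h
    · have := ht.row_lt ha h.1
      omega

theorem IsTableau.sublevelShape_mem_interlacing (ht : IsTableau a t) (ha : Antitone a) :
    sublevelShape a t ∈ interlacing a := by
  refine mem_interlacing_iff_extendZero.mpr fun i =>
    ⟨extendZero_le_of_cells_subset fun j hj => ?_, extendZero_le_of_cells_subset fun j hj => ?_⟩
  · rw [ht.mem_cells_sublevelShape ha]
    have := ht.col_lt i j hj
    have := ht.le _ hj
    exact ⟨above_mem_cells ha hj, by omega⟩
  · exact ((ht.mem_cells_sublevelShape ha).mp hj).1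

/-- The part of a tableau formed by its entries at most `m`. -/
def sublevelTableau (a : Fin (m + 1) → ℕ) (t : Cell → ℕ) (c : Cell) : ℕ :=
  if c ∈ cells (sublevelShape a t) then t c else 0

theorem IsTableau.isTableau_sublevelTableau (ht : IsTableau a t) (ha : Antitone a) :
    IsTableau (sublevelShape a t) (sublevelTableau a t) := by
  have hmem {c : Cell} := ht.mem_cells_sublevelShape ha (c := c)
  refine ⟨fun c hc => if_neg hc, fun c hc => ?_, fun c hc => ?_, fun i j hc => ?_, fun i j hc => ?_⟩
  · rw [sublevelTableau, if_pos hc]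
    exact ht.pos c (hmem.mp hc).1
  · rw [sublevelTableau, if_pos hc]
    exact (hmem.mp hc).2
  · rw [sublevelTableau, sublevelTableau, if_pos hc, if_pos (left_mem_cells hc)]
    exact ht.row_le i j (hmem.mp hc).1
  · have hlt := ht.col_lt i j (hmem.mp hc).1
    have hc' : (i, j) ∈ cells (sublevelShape a t) :=
      hmem.mpr ⟨above_mem_cells ha (hmem.mp hc).1, hlt.le.trans (hmem.mp hc).2⟩
    rwa [sublevelTableau, sublevelTableau, if_pos hc, if_pos hc']

/-- The filling of the diagram `a` by `t` on the subdiagram `k` and by `m + 1` outside. -/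
def fillLargest (a : Fin (m + 1) → ℕ) (k : Fin m → ℕ) (t : Cell → ℕ) (c : Cell) : ℕ :=
  if c ∈ cells k then t c else if c ∈ cells a then m + 1 else 0

theorem IsTableau.fillLargest_le_iff (ht : IsTableau k t) {c : Cell} (hc : c ∈ cells a) :
    fillLargest a k t c ≤ m ↔ c ∈ cells k := by
  by_cases hck : c ∈ cells k
  · simp [fillLargest, hck, ht.le c hck]
  · simp [fillLargest, hck, hc]

theorem IsTableau.isTableau_fillLargest (ht : IsTableau k t) (hk : k ∈ interlacing a) :
    IsTableau a (fillLargest a k t) := by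
  have hsub := cells_subset_of_mem_interlacing hk
  refine ⟨fun c hc => ?_, fun c hc => ?_, fun c hc => ?_, fun i j hc => ?_, fun i j hc => ?_⟩
  · simp [fillLargest, hc, mt (@hsub c) hc]
  · by_cases hck : c ∈ cells k
    · simpa [fillLargest, hck] using ht.pos c hck
    · simp [fillLargest, hck, hc]
  · by_cases hck : c ∈ cells k
    · simpa [fillLargest, hck] using (ht.le c hck).trans m.le_succ
    · simp [fillLargest, hck, hc]
  · by_cases hck : (i, j + 1) ∈ cells k
    · simpa [fillLargest, hck, left_mem_cells hck] using ht.row_le i j hck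
    · by_cases hck' : (i, j) ∈ cells k
      · simpa [fillLargest, hck, hck', hc] using (ht.le _ hck').trans m.le_succ
      · simp [fillLargest, hck, hck', hc, left_mem_cells hc]
  · have hck' := above_mem_cells_of_mem_interlacing hk hc
    by_cases hck : (i + 1, j) ∈ cells k
    · simpa [fillLargest, hck, hck'] using ht.col_lt i j hck
    · simpa [fillLargest, hck, hck', hc] using Nat.lt_succ_of_le (ht.le _ hck')

theorem IsTableau.sublevelShape_fillLargest (ht : IsTableau k t) (hk : k ∈ interlacing a)
    (ha : Antitone a) : sublevelShape a (fillLargest a k t) = k := by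
  refine cells_injective <| Finset.ext fun c => ?_
  rw [(ht.isTableau_fillLargest hk).mem_cells_sublevelShape ha]
  refine ⟨fun h => (ht.fillLargest_le_iff h.1).mp h.2, fun h => ?_⟩
  have := cells_subset_of_mem_interlacing hk h
  exact ⟨this, (ht.fillLargest_le_iff this).mpr h⟩

theorem IsTableau.sublevelTableau_fillLargest (ht : IsTableau k t) (hk : k ∈ interlacing a)
    (ha : Antitone a) : sublevelTableau a (fillLargest a k t) = t := by
  ext c
  by_cases hc : c ∈ cells k
  · simp [sublevelTableau, ht.sublevelShape_fillLargest hk ha, fillLargest, hc]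
  · simp [sublevelTableau, ht.sublevelShape_fillLargest hk ha, hc, ht.eq_zero c hc]

theorem IsTableau.fillLargest_sublevelTableau (ht : IsTableau a t) (ha : Antitone a) :
    fillLargest a (sublevelShape a t) (sublevelTableau a t) = t := by
  ext c
  have hmem := ht.mem_cells_sublevelShape ha (c := c)
  by_cases hck : c ∈ cells (sublevelShape a t)
  · simp [fillLargest, sublevelTableau, hck]
  · by_cases hc : c ∈ cells a
    · have := ht.le c hc
      have : ¬ t c ≤ m := fun h => hck (hmem.mpr ⟨hc, h⟩)
      simp only [fillLargest, hck, hc, if_true, if_false]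
      omega
    · simp [fillLargest, hck, hc, ht.eq_zero c hc]

theorem IsTableau.tableauWeight_fillLargest (ht : IsTableau k t) (hk : k ∈ interlacing a) :
    tableauWeight a (fillLargest a k t)
      = Fin.snoc (tableauWeight k t) (∑ i, a i - ∑ i, k i) := by
  have hsub := cells_subset_of_mem_interlacing hk
  refine funext fun i => Fin.lastCases ?_ (fun i => ?_) i
  · rw [Fin.snoc_last, tableauWeight, ← card_cells, ← card_cells, ← card_sdiff_of_subset hsub]
    congr 1
    ext c
    simp only [mem_filter, mem_sdiff, Fin.val_last]
    refine and_congr_right fun hc => ?_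
    rw [← ht.fillLargest_le_iff hc]
    have := (ht.isTableau_fillLargest hk).le c hc
    omega
  · rw [Fin.snoc_castSucc, tableauWeight, tableauWeight]
    congr 1
    ext c
    simp only [mem_filter, Fin.val_castSucc]
    by_cases hck : c ∈ cells k
    · simp [fillLargest, hck, hsub hck]
    · simp only [hck, false_and, iff_false, not_and]
      intro hc
      rw [← ht.fillLargest_le_iff hc] at hck
      omega

end Tableaux

section SchurPolynomials

variable {m : ℕ}

/-- The Schur polynomial in `m` variables of the shape with row lengths `a`, as the generating
function of the semistandard tableaux. -/
noncomputable def schurPoly (a : Fin m → ℕ) : MvPolynomial (Fin m) ℚ :=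
  ∑ t ∈ tableaux a, ∏ i, X i ^ tableauWeight a t i

theorem coeffAt_schurPoly (a d : Fin m → ℕ) :
    coeffAt d (schurPoly a) = #{t ∈ tableaux a | tableauWeight a t = d} := by
  simp only [schurPoly, map_sum, coeffAt_prod_X_pow, sum_boole]

theorem schurPoly_succ {a : Fin (m + 1) → ℕ} (ha : Antitone a) :
    schurPoly a = ∑ k ∈ interlacing a,
      rename Fin.castSucc (schurPoly k) * X (Fin.last m) ^ (∑ i, a i - ∑ i, k i) := by
  simp only [schurPoly, map_sum, sum_mul]
  rw [sum_sigma']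
  symm
  refine sum_nbij' (fun p => fillLargest a p.1 p.2)
    (fun t => ⟨sublevelShape a t, sublevelTableau a t⟩) (fun p hp => ?_) (fun t ht => ?_)
    (fun p hp => ?_) (fun t ht => ?_) (fun p hp => ?_)
  all_goals simp only [mem_sigma, mem_tableaux] at *
  · exact hp.2.isTableau_fillLargest hp.1
  · exact ⟨ht.sublevelShape_mem_interlacing ha, ht.isTableau_sublevelTableau ha⟩
  · rw [hp.2.sublevelShape_fillLargest hp.1 ha, hp.2.sublevelTableau_fillLargest hp.1 ha]
  · exact ht.fillLargest_sublevelTableau ha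
  · rw [hp.2.tableauWeight_fillLargest hp.1, Fin.prod_univ_castSucc]
    simp only [map_prod, map_pow, rename_X, Fin.snoc_castSucc, Fin.snoc_last]

theorem schurPoly_fin_zero (a : Fin 0 → ℕ) : schurPoly a = 1 := by
  have cells_eq : cells a = ∅ := by
    rw [← card_eq_zero, card_cells, univ_eq_empty, sum_empty]
  have : tableaux a = {0} := by
    ext t
    rw [mem_tableaux, mem_singleton]
    refine ⟨fun ht => funext fun c => ht.eq_zero c (by simp [cells_eq]), ?_⟩
    rintro rfl
    constructor <;> simp [cells_eq]
  simp [schurPoly, this]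

theorem alternant_staircase_succ :
    alternant (staircase (m + 1)) = (∏ j : Fin m, (X j.castSucc - X (Fin.last m))) *
      rename Fin.castSucc (alternant (staircase m)) := by
  have interlacing_zero : interlacing (0 : Fin (m + 1) → ℕ) = {0} := by
    ext k
    simp [mem_interlacing, funext_iff]
  have := alternant_add_staircase_succ (m := m) (antitone_const (c := 0))
  change alternant (0 + staircase (m + 1)) = _ * ∑ k ∈ interlacing 0, _ at this
  simpa [interlacing_zero] using this

/-- The bialternant formula: both sides satisfy the same branching rule. -/
theorem alternant_staircase_mul_schurPoly :
    ∀ {m : ℕ} {a : Fin m → ℕ}, Antitone a →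
      alternant (staircase m) * schurPoly a = alternant (a + staircase m)
  | 0, a, _ => by
    simp [schurPoly_fin_zero, alternant]
  | m + 1, a, ha => by
    rw [alternant_add_staircase_succ ha, alternant_staircase_succ, schurPoly_succ ha, mul_assoc,
      mul_sum]
    congr 1
    refine sum_congr rfl fun k hk => ?_
    rw [← alternant_staircase_mul_schurPoly (antitone_of_mem_interlacing hk), map_mul, mul_assoc]

end SchurPolynomials

section RowLengths

theorem lt_getD_iff_lt_countP {j : ℕ} :
    ∀ {l : List ℕ}, l.Pairwise (· ≥ ·) → ∀ i, j < l.getD i 0 ↔ i < l.countP (j < ·)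
  | [], _, i => by simp
  | x :: l, h, i => by
    obtain ⟨hx, hl⟩ := List.pairwise_cons.mp h
    by_cases hj : j < x
    · cases i with
      | zero => simp [hj]
      | succ i => simpa [hj] using lt_getD_iff_lt_countP hl i
    · have countP_eq_zero : l.countP (j < ·) = 0 :=
        List.countP_eq_zero.mpr fun y hy => by simpa using (hx y hy).trans (not_lt.mp hj)
      cases i with
      | zero => simp [hj, countP_eq_zero]
      | succ i =>
        have := lt_getD_iff_lt_countP (j := j) hl i
        simpa [hj, countP_eq_zero, -List.countP_eq_zero] using this

variable {N : ℕ}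

theorem lt_rowLen_iff (lam : Nat.Partition N) {i j : ℕ} :
    j < rowLen lam i ↔ i < lam.parts.countP (j < ·) := by
  have sorted : ((lam.parts.sort (· ≤ ·)).reverse).Pairwise (· ≥ ·) :=
    List.pairwise_reverse.mpr (Multiset.pairwise_sort _ _)
  rw [rowLen, lt_getD_iff_lt_countP sorted, List.countP_reverse, ← Multiset.coe_countP,
    Multiset.sort_eq]

theorem antitone_rowLen (lam : Nat.Partition N) : Antitone (rowLen lam) := fun _ _ h =>
  le_of_forall_lt fun _ hj => (lt_rowLen_iff lam).mpr (h.trans_lt ((lt_rowLen_iff lam).mp hj))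

theorem countP_lt_eq_countP_succ_lt_add_count (s : Multiset ℕ) (j : ℕ) :
    s.countP (j < ·) = s.countP (j + 1 < ·) + s.count (j + 1) := by
  induction s using Multiset.induction_on with
  | empty => simp
  | cons x s ih =>
    rw [Multiset.countP_cons, Multiset.countP_cons, Multiset.count_cons, ih]
    split_ifs <;> omega

theorem rowLen_injective : Function.Injective (rowLen (N := N)) := fun lam nu h => by
  have countP_eq (j : ℕ) : lam.parts.countP (j < ·) = nu.parts.countP (j < ·) :=
    eq_of_forall_lt_iff fun i => by rw [← lt_rowLen_iff, ← lt_rowLen_iff, h]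
  refine Nat.Partition.ext <| Multiset.ext.mpr fun x => ?_
  cases x with
  | zero =>
    rw [Multiset.count_eq_zero_of_notMem fun h0 => (lam.parts_pos h0).ne rfl,
      Multiset.count_eq_zero_of_notMem fun h0 => (nu.parts_pos h0).ne rfl]
  | succ j =>
    have := countP_lt_eq_countP_succ_lt_add_count lam.parts j
    have := countP_lt_eq_countP_succ_lt_add_count nu.parts j
    have := countP_eq j
    have := countP_eq (j + 1)
    omega

theorem rowLen_of_le (lam : Nat.Partition N) {i : ℕ} (h : N ≤ i) : rowLen lam i = 0 := by
  by_contra hne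
  have card_le : Multiset.card lam.parts ≤ N := by
    simpa [lam.parts_sum] using
      Multiset.card_nsmul_le_sum (s := lam.parts) (a := 1) fun _ hx => lam.parts_pos hx
  have := (lt_rowLen_iff lam).mp (Nat.pos_of_ne_zero hne)
  have := Multiset.countP_le_card (0 < ·) lam.parts
  omega

theorem rowLen_twoOne_zero (n i : ℕ) : rowLen (twoOne n 0) i = if i < n then 2 else 0 :=
  eq_of_forall_lt_iff fun j => by
    have countP_eq : (Multiset.replicate n 2).countP (j < ·) = if j < 2 then n else 0 := by
      rw [← Multiset.coe_replicate, Multiset.coe_countP, List.countP_replicate]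
      simp
    rw [lt_rowLen_iff]
    simp only [twoOne, Multiset.replicate_zero, add_zero, countP_eq]
    split_ifs <;> omega

/-- The first `m` row lengths of a partition. -/
def rows (m : ℕ) (lam : Nat.Partition N) (i : Fin m) : ℕ := rowLen lam i

variable {m : ℕ}

theorem antitone_rows (lam : Nat.Partition N) : Antitone (rows m lam) := fun _ _ h =>
  antitone_rowLen lam h

theorem extendZero_rows {lam : Nat.Partition N} (h : rowLen lam m = 0) :
    extendZero (rows m lam) = rowLen lam := by
  ext i
  by_cases hi : i < m
  · simp [extendZero, rows, hi]
  · rw [extendZero_of_le _ (not_lt.mp hi)]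
    exact (Nat.eq_zero_of_le_zero (h ▸ antitone_rowLen lam (not_lt.mp hi))).symm

theorem rows_injOn : Set.InjOn (rows m) {lam : Nat.Partition N | rowLen lam m = 0} :=
  fun lam hlam nu hnu h => rowLen_injective <| by
    rw [← extendZero_rows hlam, ← extendZero_rows hnu, h]

theorem exists_rows_eq {a : Fin m → ℕ} (ha : Antitone a) (hsum : ∑ i, a i = N) :
    ∃ lam : Nat.Partition N, rows m lam = a := by
  refine ⟨Nat.Partition.ofSums N (univ.val.map a) hsum, funext fun i => ?_⟩
  refine eq_of_forall_lt_iff fun j => ?_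
  have countP_eq : (Nat.Partition.ofSums N (univ.val.map a) hsum).parts.countP (j < ·)
      = #{i | j < a i} := by
    have (x : ℕ) : (j < x ∧ x ≠ 0) ↔ j < x :=
      and_iff_left_of_imp fun h => (j.zero_le.trans_lt h).ne'
    change ((univ.val.map a).filter (· ≠ 0)).countP (j < ·) = _
    simp only [Multiset.countP_filter, this, Multiset.countP_map]
    rfl
  rw [rows, lt_rowLen_iff, countP_eq, Tuple.lt_card_gt_iff_apply_gt_of_antitone ha]

end RowLengths

section Weights

variable {m : ℕ}

/-- The weight `0, d 0, d 1, …, d (m - 1), 0, 0, …` on colors and entries: as these are positive,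
the variable `X i` stands for the color `i + 1`. -/
def weightOf (d : Fin m → ℕ) : ℕ → ℕ
  | 0 => 0
  | i + 1 => extendZero d i

theorem weightOf_of_lt (d : Fin m → ℕ) {i : ℕ} (h : m < i) : weightOf d i = 0 := by
  obtain ⟨i, rfl⟩ := Nat.exists_eq_add_of_lt h
  exact extendZero_of_le d (by omega)

theorem weightOf_extendZero {M : ℕ} (h : m ≤ M) (d : Fin m → ℕ) :
    weightOf (fun i : Fin M => extendZero d i) = weightOf d := by
  ext (_ | i)
  · rfl
  · by_cases hi : i < M
    · exact extendZero_val (fun i : Fin M => extendZero d i) ⟨i, hi⟩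
    · rw [weightOf, weightOf, extendZero_of_le _ (by omega), extendZero_of_le _ (by omega)]

variable {ι : Type*} {f : ι → ℕ}

theorem le_of_card_eq_weightOf [Finite ι] {d : Fin m → ℕ}
    (h : ∀ i, Nat.card {v // f v = i} = weightOf d i) (v : ι) : f v ≤ m := by
  by_contra! hv
  have := h (f v)
  rw [weightOf_of_lt d hv, Finite.card_eq_zero_iff] at this
  exact this.false ⟨v, rfl⟩

theorem card_eq_weightOf_iff {d : Fin m → ℕ} (pos : ∀ v, 0 < f v) (le : ∀ v, f v ≤ m) :
    (∀ i, Nat.card {v // f v = i} = weightOf d i)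
      ↔ (fun i : Fin m => Nat.card {v // f v = i + 1}) = d := by
  refine ⟨fun h => funext fun i => (h _).trans (extendZero_val d i), ?_⟩
  rintro rfl (_ | i)
  · exact Nat.card_eq_zero.mpr (.inl ⟨fun v => (pos v).ne' v.2⟩)
  · by_cases hi : i < m
    · simp [weightOf, extendZero, hi]
    · rw [weightOf_of_lt _ (by omega)]
      exact Nat.card_eq_zero.mpr (.inl ⟨fun v => by have := le v; have := v.2; omega⟩)

theorem exists_card_eq_weightOf [Finite ι] (pos : ∀ v, 0 < f v) :
    ∃ (m : ℕ) (d : Fin m → ℕ), ∀ i, Nat.card {v // f v = i} = weightOf d i := by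
  obtain ⟨m, hm⟩ := (Set.finite_range f).bddAbove
  exact ⟨m, _, (card_eq_weightOf_iff pos fun v => hm (Set.mem_range_self v)).mpr rfl⟩

end Weights

section SchurFunctions

variable {N m : ℕ} {lam : Nat.Partition N}

theorem diag_eq_cells (h : rowLen lam m = 0) : diag lam = cells (rows m lam) := by
  ext c
  rw [mem_coe, mem_cells, extendZero_rows h]
  rfl

instance finite_diag : Finite (diag lam) := by
  rw [diag_eq_cells (rowLen_of_le lam le_rfl)]
  exact Finset.finite_toSet _

theorem isSSYT_and_le_iff_isTableau (h : rowLen lam m = 0) {t : Cell → ℕ} :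
    IsSSYT lam t ∧ (∀ c ∈ diag lam, t c ≤ m) ↔ IsTableau (rows m lam) t := by
  simp only [IsSSYT, diag_eq_cells h, mem_coe]
  exact ⟨fun ⟨⟨h0, hpos, hrow, hcol⟩, hle⟩ => ⟨h0, hpos, hle, hrow, hcol⟩,
    fun ⟨h0, hpos, hle, hrow, hcol⟩ => ⟨⟨h0, hpos, hrow, hcol⟩, hle⟩⟩

theorem card_entries_eq (lam : Nat.Partition N) (t : Cell → ℕ) (i : ℕ) :
    Nat.card {c : Cell // c ∈ diag lam ∧ t c = i} = Nat.card {c : diag lam // t c = i} :=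
  Nat.card_congr (Equiv.subtypeSubtypeEquivSubtypeInter _ _).symm

theorem isSSYT_and_weight_iff (h : rowLen lam m = 0) {t : Cell → ℕ} {d : Fin m → ℕ} :
    (IsSSYT lam t ∧ ∀ i, Nat.card {c : Cell // c ∈ diag lam ∧ t c = i} = weightOf d i)
      ↔ IsTableau (rows m lam) t ∧ tableauWeight (rows m lam) t = d := by
  have weight_iff (ht : IsTableau (rows m lam) t) :
      (∀ i, Nat.card {c : Cell // c ∈ diag lam ∧ t c = i} = weightOf d i)
        ↔ tableauWeight (rows m lam) t = d := by
    have ht := (isSSYT_and_le_iff_isTableau h).mpr ht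
    simp only [card_entries_eq]
    rw [card_eq_weightOf_iff (fun c : diag lam => ht.1.2.1 c c.2) fun c : diag lam => ht.2 c c.2]
    simp only [← card_entries_eq, diag_eq_cells h, mem_coe]
    have : (fun i : Fin m => Nat.card {c : Cell // c ∈ cells (rows m lam) ∧ t c = i + 1})
        = tableauWeight (rows m lam) t := funext fun i =>
      Nat.subtype_card _ fun c => by simp
    rw [this]
  refine ⟨fun ⟨ht, hw⟩ => ?_, fun ⟨ht, hw⟩ =>
    ⟨((isSSYT_and_le_iff_isTableau h).mpr ht).1, (weight_iff ht).mpr hw⟩⟩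
  have le (c : diag lam) : t c ≤ m :=
    le_of_card_eq_weightOf (fun i => (card_entries_eq lam t i).symm.trans (hw i)) c
  have ht := (isSSYT_and_le_iff_isTableau h).mp ⟨ht, fun c hc => le ⟨c, hc⟩⟩
  exact ⟨ht, (weight_iff ht).mp hw⟩

theorem schurFn_weightOf (h : rowLen lam m = 0) (d : Fin m → ℕ) :
    schurFn lam (weightOf d) = coeffAt d (schurPoly (rows m lam)) := by
  rw [coeffAt_schurPoly, schurFn]
  congr 1
  exact Nat.subtype_card _ fun t => by
    rw [isSSYT_and_weight_iff h, mem_filter, mem_tableaux]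

theorem exists_eq_weightOf_of_schurFn_ne_zero {μ : ℕ → ℕ} (h : schurFn lam μ ≠ 0) :
    ∃ (m : ℕ) (d : Fin m → ℕ), μ = weightOf d := by
  obtain ⟨⟨t, ht, hμ⟩⟩ := (Nat.card_ne_zero.mp (Nat.cast_ne_zero.mp h)).1
  obtain ⟨m, d, hd⟩ := exists_card_eq_weightOf fun c : diag lam => ht.2.1 c c.2
  exact ⟨m, d, funext fun i => (hμ i).symm.trans ((card_entries_eq lam t i).trans (hd i))⟩

theorem schurFn_weightOf_eq_zero (h : rowLen lam m ≠ 0) (d : Fin m → ℕ) :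
    schurFn lam (weightOf d) = 0 := by
  have m_lt : m < N := not_le.mp (mt (rowLen_of_le lam) h)
  by_contra hne
  obtain ⟨⟨t, ht, hd⟩⟩ := (Nat.card_ne_zero.mp (Nat.cast_ne_zero.mp hne)).1
  have le (c : diag lam) : t c ≤ m :=
    le_of_card_eq_weightOf (fun i => (card_entries_eq lam t i).symm.trans (hd i)) c
  have hN : rowLen lam N = 0 := rowLen_of_le lam le_rfl
  have isTableau : IsTableau (rows N lam) t :=
    (isSSYT_and_le_iff_isTableau hN).mp ⟨ht, fun c hc => (le ⟨c, hc⟩).trans m_lt.le⟩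
  have mem : ((m, 0) : Cell) ∈ diag lam := Nat.pos_of_ne_zero h
  have := le ⟨_, mem⟩
  rw [diag_eq_cells hN] at mem
  exact (isTableau.row_lt (antitone_rows lam) mem).not_ge this

end SchurFunctions

section SchurExpansions

variable {N m : ℕ}

theorem strictAnti_add_staircase {a : Fin m → ℕ} (ha : Antitone a) :
    StrictAnti (a + staircase m) := ha.add_strictAnti strictAnti_staircase

theorem coeffAt_alternant_staircase_mul_schurPoly {lam nu : Nat.Partition N}
    (hlam : rowLen lam m = 0) (hnu : rowLen nu m = 0) :
    coeffAt (rows m lam + staircase m) (alternant (staircase m) * schurPoly (rows m nu))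
      = if nu = lam then 1 else 0 := by
  rw [alternant_staircase_mul_schurPoly (antitone_rows nu),
    coeffAt_alternant_of_strictAnti (strictAnti_add_staircase (antitone_rows lam))
      (strictAnti_add_staircase (antitone_rows nu))]
  simp only [add_left_inj, rows_injOn.eq_iff hnu hlam]

theorem coeffAt_alternant_staircase_mul {c : Nat.Partition N → ℚ} {P : MvPolynomial (Fin m) ℚ}
    (hP : ∀ d, coeffAt d P = ∑ nu, c nu * schurFn nu (weightOf d)) {lam : Nat.Partition N}
    (hlam : rowLen lam m = 0) :
    coeffAt (rows m lam + staircase m) (alternant (staircase m) * P) = c lam := by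
  have P_eq : P = ∑ nu with rowLen nu m = 0, c nu • schurPoly (rows m nu) := by
    refine coeffAt_ext fun d => ?_
    rw [hP, map_sum, sum_filter]
    refine sum_congr rfl fun nu _ => ?_
    split_ifs with hnu
    · rw [map_smul, schurFn_weightOf hnu, smul_eq_mul]
    · rw [schurFn_weightOf_eq_zero hnu, mul_zero]
  rw [P_eq, mul_sum, map_sum, sum_eq_single_of_mem lam (by simpa using hlam)]
  · rw [mul_smul_comm, map_smul, coeffAt_alternant_staircase_mul_schurPoly hlam hlam, if_pos rfl,
      smul_eq_mul, mul_one]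
  · intro nu hnu hne
    rw [mul_smul_comm, map_smul,
      coeffAt_alternant_staircase_mul_schurPoly hlam (mem_filter.mp hnu).2, if_neg hne, smul_zero]

theorem sum_eq_of_coeffAt_ne_zero {P : MvPolynomial (Fin m) ℚ} (hP : P.IsHomogeneous N)
    {d : Fin m → ℕ} (h : coeffAt d P ≠ 0) : ∑ i, d i = N := by
  have := hP h
  simpa [Finsupp.weight_apply, Finsupp.sum_fintype] using this

theorem isHomogeneous_alternant (e : Fin m → ℕ) : (alternant e).IsHomogeneous (∑ i, e i) := by
  rw [alternant, Matrix.det_apply]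
  refine IsHomogeneous.sum _ _ _ fun σ _ => ?_
  rw [← Equiv.sum_comp σ]
  have := IsHomogeneous.prod univ (fun i => (X i : MvPolynomial (Fin m) ℚ) ^ e (σ i))
    (fun i => e (σ i)) fun i _ => isHomogeneous_X_pow _ _
  exact ((homogeneousSubmodule (Fin m) ℚ _).toAddSubgroup).zsmul_mem this _

theorem antitone_add_val_of_strictAnti {e : Fin m → ℕ} (he : StrictAnti e) :
    Antitone fun i => e i + i := by
  cases m with
  | zero => exact fun i => i.elim0
  | succ m =>
    refine Fin.antitone_iff_succ_le.mpr fun i => ?_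
    have := he i.castSucc_lt_succ
    simp only [Fin.val_succ, Fin.val_castSucc]
    omega

theorem exists_antitone_add_staircase_eq {e : Fin m → ℕ} (he : StrictAnti e) :
    ∃ a : Fin m → ℕ, Antitone a ∧ a + staircase m = e := by
  have anti := antitone_add_val_of_strictAnti he
  refine ⟨fun i => e i + i + 1 - m, fun i j hij => ?_, funext fun i => ?_⟩
  · have : e j + j ≤ e i + i := anti hij
    dsimp only
    omega
  · have hi := i.isLt
    have : e ⟨m - 1, by omega⟩ + (m - 1) ≤ e i + i := anti (Fin.le_def.mpr (by dsimp; omega))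
    simp only [Pi.add_apply, staircase, Fin.val_rev]
    omega

theorem exists_rows_add_staircase_eq {P : MvPolynomial (Fin m) ℚ} (homog : P.IsHomogeneous N)
    {e : Fin m → ℕ} (he : StrictAnti e) (hne : coeffAt e (alternant (staircase m) * P) ≠ 0) :
    ∃ lam : Nat.Partition N, rows m lam + staircase m = e := by
  obtain ⟨a, ha, rfl⟩ := exists_antitone_add_staircase_eq he
  have sum_eq := sum_eq_of_coeffAt_ne_zero ((isHomogeneous_alternant _).mul homog) hne
  obtain ⟨lam, rfl⟩ : ∃ lam : Nat.Partition N, rows m lam = a := by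
    refine exists_rows_eq ha ?_
    simp only [Pi.add_apply, sum_add_distrib] at sum_eq
    omega
  exact ⟨lam, rfl⟩

theorem eq_sum_coeffAt_smul_schurPoly {P : MvPolynomial (Fin m) ℚ} (symm : P.IsSymmetric)
    (homog : P.IsHomogeneous N) (h : N ≤ m) :
    P = ∑ nu : Nat.Partition N,
      coeffAt (rows m nu + staircase m) (alternant (staircase m) * P) • schurPoly (rows m nu) := by
  refine mul_left_cancel₀ alternant_staircase_ne_zero ?_
  simp only [mul_sum, mul_smul_comm, alternant_staircase_mul_schurPoly (antitone_rows _)]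
  refine ((isAlternating_alternant _).mul_isSymmetric symm).ext
    (.sum fun nu _ => (isAlternating_alternant _).smul _) fun e he => ?_
  simp only [map_sum, map_smul, smul_eq_mul, mul_ite, mul_one, mul_zero,
    coeffAt_alternant_of_strictAnti he (strictAnti_add_staircase (antitone_rows _))]
  by_cases hlam : ∃ lam : Nat.Partition N, rows m lam + staircase m = e
  · obtain ⟨lam, rfl⟩ := hlam
    have rows_eq_iff (nu : Nat.Partition N) :
        rows m nu + staircase m = rows m lam + staircase m ↔ nu = lam := by
      rw [add_left_inj, rows_injOn.eq_iff (rowLen_of_le nu h) (rowLen_of_le lam h)]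
    simp only [rows_eq_iff, sum_ite_eq', mem_univ, if_true]
  · rw [not_imp_comm.mp (exists_rows_add_staircase_eq homog he) hlam]
    exact (sum_eq_zero fun nu _ => if_neg fun hnu => hlam ⟨nu, hnu⟩).symm

/-- `P` lists the restrictions to finitely many variables of the symmetric function, homogeneous
of degree `N`, whose monomial coefficients are given by `F`. -/
structure IsRestriction (N : ℕ) (F : (ℕ → ℕ) → ℚ) (P : ∀ m, MvPolynomial (Fin m) ℚ) : Prop where
  isSymmetric : ∀ m, (P m).IsSymmetric
  isHomogeneous : ∀ m, (P m).IsHomogeneous N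
  coeffAt_eq : ∀ m d, coeffAt d (P m) = F (weightOf d)
  exists_eq_weightOf : ∀ μ, F μ ≠ 0 → ∃ (m : ℕ) (d : Fin m → ℕ), μ = weightOf d

variable {F : (ℕ → ℕ) → ℚ} {P : ∀ m, MvPolynomial (Fin m) ℚ}

theorem IsRestriction.eq_sum_of_le (hF : IsRestriction N F P) (h : N ≤ m) (d : Fin m → ℕ) :
    F (weightOf d) = ∑ nu : Nat.Partition N,
      coeffAt (rows m nu + staircase m) (alternant (staircase m) * P m)
        * schurFn nu (weightOf d) := by
  have := congrArg (coeffAt d)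
    (eq_sum_coeffAt_smul_schurPoly (hF.isSymmetric m) (hF.isHomogeneous m) h)
  rw [← hF.coeffAt_eq, this]
  simp only [map_sum, map_smul, smul_eq_mul, schurFn_weightOf (rowLen_of_le _ h)]

theorem IsRestriction.eq_sum (hF : IsRestriction N F P) (μ : ℕ → ℕ) :
    F μ = ∑ nu : Nat.Partition N,
      coeffAt (rows N nu + staircase N) (alternant (staircase N) * P N) * schurFn nu μ := by
  by_cases hμ : ∃ (m : ℕ) (d : Fin m → ℕ), μ = weightOf d
  · obtain ⟨m, d, rfl⟩ := hμ
    rw [← weightOf_extendZero (le_max_left m N) d, hF.eq_sum_of_le (le_max_right m N)]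
    refine sum_congr rfl fun nu _ => congrArg (· * _) ?_
    -- The expansion in `max m N` variables restricts to one in `N` variables, which is unique.
    refine (coeffAt_alternant_staircase_mul
      (c := fun nu => coeffAt (rows (max m N) nu + staircase (max m N))
        (alternant (staircase (max m N)) * P (max m N)))
      (fun d => ?_) (rowLen_of_le nu le_rfl)).symm
    rw [hF.coeffAt_eq, ← weightOf_extendZero (le_max_right m N), hF.eq_sum_of_le (le_max_right m N)]
  · rw [not_imp_comm.mp (hF.exists_eq_weightOf μ) hμ]
    exact (sum_eq_zero fun nu _ => mul_eq_zero_of_right _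
      (not_imp_comm.mp exists_eq_weightOf_of_schurFn_ne_zero hμ)).symm

theorem IsRestriction.sCoeff_eq (hF : IsRestriction N F P) {lam : Nat.Partition N}
    (h : rowLen lam m = 0) :
    sCoeff F lam = coeffAt (rows m lam + staircase m) (alternant (staircase m) * P m) := by
  have sum_eq (c : Nat.Partition N →₀ ℚ) (μ : ℕ → ℕ) :
      (c.sum fun nu a => a * schurFn nu μ) = ∑ nu, c nu * schurFn nu μ :=
    c.sum_fintype _ fun _ => zero_mul _
  have expansion : ∃ c : Nat.Partition N →₀ ℚ, ∀ μ, F μ = c.sum fun nu a => a * schurFn nu μ :=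
    ⟨Finsupp.equivFunOnFinite.symm fun nu =>
      coeffAt (rows N nu + staircase N) (alternant (staircase N) * P N), fun μ => by
        rw [hF.eq_sum μ, sum_eq]
        rfl⟩
  rw [sCoeff, dif_pos expansion]
  refine (coeffAt_alternant_staircase_mul (fun d => ?_) h).symm
  rw [hF.coeffAt_eq, expansion.choose_spec, sum_eq]

end SchurExpansions

section ChromaticPolynomials

variable {V : Type*} [Fintype V] {m : ℕ}

/-- The proper colorings by `m` colors; the color `i + 1` of `IsProperColoring` is `i : Fin m`. -/
noncomputable def properColorings (G : SimpleGraph V) (m : ℕ) : Finset (V → Fin m) :=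
  {f | ∀ u v, G.Adj u v → f u ≠ f v}

theorem mem_properColorings {G : SimpleGraph V} {f : V → Fin m} :
    f ∈ properColorings G m ↔ ∀ u v, G.Adj u v → f u ≠ f v := by
  simp [properColorings]

/-- The chromatic symmetric function in `m` variables. -/
noncomputable def chromaticSymmPoly (G : SimpleGraph V) (m : ℕ) : MvPolynomial (Fin m) ℚ :=
  ∑ f ∈ properColorings G m, ∏ v, X (f v)

theorem prod_X_eq_prod_pow_card (f : V → Fin m) :
    (∏ v, X (f v) : MvPolynomial (Fin m) ℚ) = ∏ i, X i ^ #{v | f v = i} := by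
  rw [← prod_fiberwise univ f]
  refine prod_congr rfl fun i _ => ?_
  rw [prod_congr rfl fun v hv => by rw [(mem_filter.mp hv).2], prod_const]

theorem coeffAt_chromaticSymmPoly (G : SimpleGraph V) (d : Fin m → ℕ) :
    coeffAt d (chromaticSymmPoly G m)
      = #{f ∈ properColorings G m | (fun i => #{v | f v = i}) = d} := by
  simp only [chromaticSymmPoly, prod_X_eq_prod_pow_card, map_sum, coeffAt_prod_X_pow, sum_boole]

theorem card_shift_eq (f : V → Fin m) (i : Fin m) :
    Nat.card {v // (f v : ℕ) + 1 = i + 1} = #{v | f v = i} :=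
  Nat.subtype_card _ fun v => by simp [Fin.ext_iff]

theorem isProperColoring_shift_iff {G : SimpleGraph V} {f : V → Fin m} :
    IsProperColoring G (fun v => f v + 1) ↔ f ∈ properColorings G m := by
  simp [IsProperColoring, mem_properColorings, Fin.ext_iff]

theorem XCoeff_weightOf (G : SimpleGraph V) (d : Fin m → ℕ) :
    XCoeff G (weightOf d) = coeffAt d (chromaticSymmPoly G m) := by
  have weight_iff (f : V → Fin m) :
      (∀ i, Nat.card {v // (f v : ℕ) + 1 = i} = weightOf d i)
        ↔ (fun i => #{v | f v = i}) = d := by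
    rw [card_eq_weightOf_iff (fun v => Nat.succ_pos _) fun v => (f v).isLt]
    simp only [card_shift_eq]
  have shift_injective : Function.Injective fun (f : V → Fin m) v => (f v : ℕ) + 1 :=
    fun f g h => funext fun v => Fin.ext (Nat.succ_injective (congrFun h v))
  rw [coeffAt_chromaticSymmPoly, XCoeff, ← card_image_of_injective _ shift_injective]
  congr 1
  refine Nat.subtype_card _ fun f => ?_
  simp only [mem_image, mem_filter]
  constructor
  · rintro ⟨f, ⟨hf, hd⟩, rfl⟩
    exact ⟨isProperColoring_shift_iff.mpr hf, (weight_iff f).mpr hd⟩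
  · rintro ⟨hf, hd⟩
    have le (v : V) : f v ≤ m := le_of_card_eq_weightOf hd v
    obtain ⟨f, rfl⟩ : ∃ g : V → Fin m, f = fun v => (g v : ℕ) + 1 :=
      ⟨fun v => ⟨f v - 1, by have := hf.1 v; have := le v; omega⟩,
        funext fun v => (Nat.succ_pred_eq_of_pos (hf.1 v)).symm⟩
    exact ⟨f, ⟨isProperColoring_shift_iff.mp hf, (weight_iff f).mp hd⟩, rfl⟩

theorem isSymmetric_chromaticSymmPoly (G : SimpleGraph V) :
    (chromaticSymmPoly G m).IsSymmetric := fun σ => by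
  simp only [chromaticSymmPoly, map_sum, map_prod, rename_X]
  refine sum_equiv (Equiv.arrowCongr (Equiv.refl V) σ) (fun f => ?_) fun f _ => rfl
  simp [mem_properColorings]

theorem isHomogeneous_chromaticSymmPoly (G : SimpleGraph V) :
    (chromaticSymmPoly G m).IsHomogeneous (Fintype.card V) :=
  IsHomogeneous.sum _ _ _ fun f _ => by
    simpa using IsHomogeneous.prod univ (fun v => (X (f v) : MvPolynomial (Fin m) ℚ)) (fun _ => 1)
      fun v _ => isHomogeneous_X ℚ (f v)

theorem isRestriction_chromaticSymmPoly (G : SimpleGraph V) :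
    IsRestriction (Fintype.card V) (XCoeff G) (chromaticSymmPoly G) where
  isSymmetric _ := isSymmetric_chromaticSymmPoly G
  isHomogeneous _ := isHomogeneous_chromaticSymmPoly G
  coeffAt_eq _ d := (XCoeff_weightOf G d).symm
  exists_eq_weightOf μ h := by
    obtain ⟨⟨f, hf, hμ⟩⟩ := (Nat.card_ne_zero.mp (Nat.cast_ne_zero.mp h)).1
    obtain ⟨m, d, hd⟩ := exists_card_eq_weightOf hf.1
    exact ⟨m, d, funext fun i => (hμ i).symm.trans (hd i)⟩

end ChromaticPolynomials

section Nets

variable {n m : ℕ}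

theorem mem_properColorings_genNet {f : Fin n ⊕ Fin n → Fin m} :
    f ∈ properColorings (genNet n n) m
      ↔ Function.Injective (f ∘ Sum.inl) ∧ ∀ j, f (Sum.inr j) ≠ f (Sum.inl j) := by
  simp only [mem_properColorings, Sum.forall, genNet, SimpleGraph.fromRel_adj]
  refine ⟨fun h => ⟨fun i j hij => ?_, fun j => ?_⟩,
    fun ⟨hinj, hne⟩ => ⟨fun i => ⟨?_, ?_⟩, fun j => ⟨?_, ?_⟩⟩⟩
  · by_contra hne
    exact (h.1 i).1 j (by simp [hne]) hij
  · exact (h.2 j).1 j (by simp)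
  · exact fun j hij => hinj.ne (by simpa using hij)
  · rintro j ⟨-, hij⟩
    obtain rfl : i = j := Fin.ext (by simpa using hij)
    exact (hne i).symm
  · rintro i ⟨-, hij⟩
    obtain rfl : i = j := Fin.ext (by simpa using hij)
    exact hne i
  · simp

/-- The colors of the body form a permutation, which the pendants avoid position by position. -/
theorem chromaticSymmPoly_genNet_eq_sum (n : ℕ) :
    chromaticSymmPoly (genNet n n) n
      = ∑ σ : Equiv.Perm (Fin n), ∏ i, (X (σ i) * ∑ c ∈ univ.erase (σ i), X c) := by
  simp only [prod_mul_distrib, prod_univ_sum, mul_sum]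
  rw [sum_sigma', chromaticSymmPoly]
  symm
  refine sum_nbij (fun p => Sum.elim p.1 p.2) (fun p hp => ?_) (fun p _ q _ h => ?_)
    (fun f hf => ?_) (fun p _ => by simp)
  · simp only [mem_sigma, mem_univ, true_and, Fintype.mem_piFinset, mem_erase, and_true] at hp
    exact mem_properColorings_genNet.mpr ⟨p.1.injective, hp⟩
  · obtain ⟨hσ, hg⟩ := Sum.elim_eq_iff.mp h
    exact Sigma.ext (DFunLike.coe_injective hσ) (heq_of_eq hg)
  · obtain ⟨hinj, hne⟩ := mem_properColorings_genNet.mp hf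
    refine ⟨⟨.ofBijective _ (Finite.injective_iff_bijective.mp hinj), f ∘ Sum.inr⟩, ?_, ?_⟩
    · simpa using hne
    · exact Sum.elim_comp_inl_inr f

theorem chromaticSymmPoly_genNet (n : ℕ) :
    chromaticSymmPoly (genNet n n) n
      = (n ! : ℚ) • ((∏ i, X i) * ∏ i, (psum (Fin n) ℚ 1 - X i)) := by
  have sum_erase_eq (c : Fin n) :
      (∑ c' ∈ univ.erase c, X c' : MvPolynomial (Fin n) ℚ) = psum (Fin n) ℚ 1 - X c := by
    rw [psum_one, ← add_sum_erase univ X (mem_univ c), add_sub_cancel_left]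
  simp only [chromaticSymmPoly_genNet_eq_sum, sum_erase_eq, ← prod_mul_distrib]
  have prod_eq (σ : Equiv.Perm (Fin n)) := Equiv.prod_comp σ fun c =>
    (X c * (psum (Fin n) ℚ 1 - X c) : MvPolynomial (Fin n) ℚ)
  simp only [prod_eq, sum_const, card_univ, Fintype.card_perm, Fintype.card_fin]
  rw [Nat.cast_smul_eq_nsmul]

end Nets

section CoefficientExtraction

variable {m : ℕ}

theorem coeffAt_prod_X_mul (e : Fin m → ℕ) (T : Finset (Fin m)) (P : MvPolynomial (Fin m) ℚ) :
    coeffAt (e + Set.indicator T 1) ((∏ i ∈ T, X i) * P) = coeffAt e P := by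
  induction T using Finset.induction_on generalizing e with
  | empty => rw [coe_empty, Set.indicator_empty', add_zero, prod_empty, one_mul]
  | insert i T hi ih =>
    have : e + Set.indicator ↑(insert i T) 1 = (e + Set.indicator T 1) + Pi.single i 1 := by
      ext j
      by_cases hj : j = i <;> simp [Set.indicator_apply, hj, hi]
    rw [prod_insert hi, mul_assoc, this, coeffAt_X_mul, ih]

theorem IsAlternating.coeffAt_X_mul_eq_zero {P : MvPolynomial (Fin m) ℚ} (hP : IsAlternating P)
    {e : Fin m → ℕ} {i j : Fin m} (hij : i ≠ j) (he : e i = e j + 1) :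
    coeffAt e (X i * P) = 0 := by
  have : e = Function.update e i (e j) + Pi.single i 1 := by
    ext l
    by_cases hl : l = i
    · simp [hl, he]
    · simp [hl]
  rw [this, coeffAt_X_mul]
  exact hP.coeffAt_eq_zero hij (by simp [hij.symm])

/-- The exponents `δ + (1ᵏ)`. -/
def columnStaircase (m k : ℕ) (i : Fin m) : ℕ := staircase m i + if i < k then 1 else 0

/-- Multiplying by the power sum `p₁` adds a box to a shape, and only one box of a column is
removable. -/
theorem IsAlternating.coeffAt_psum_one_mul {P : MvPolynomial (Fin m) ℚ} (hP : IsAlternating P)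
    {k : ℕ} (hk : k < m) :
    coeffAt (columnStaircase m (k + 1)) (psum (Fin m) ℚ 1 * P)
      = coeffAt (columnStaircase m k) P := by
  rw [psum_one, sum_mul, map_sum, Fintype.sum_eq_single ⟨k, hk⟩ fun i hik => ?_]
  · have : columnStaircase m (k + 1) = columnStaircase m k + Pi.single ⟨k, hk⟩ 1 := by
      ext i
      by_cases hi : i = ⟨k, hk⟩
      · simp [columnStaircase, hi]
      · have : (i : ℕ) ≠ k := fun h => hi (Fin.ext h)
        simp [columnStaircase, hi, Order.lt_add_one_iff, this.le_iff_lt]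
    rw [this, coeffAt_X_mul]
  · have hne : (i : ℕ) ≠ k := fun h => hik (Fin.ext h)
    by_cases hi : (i : ℕ) + 1 < m
    · refine hP.coeffAt_X_mul_eq_zero (j := ⟨i + 1, hi⟩) (Fin.ne_of_val_ne (by simp)) ?_
      simp only [columnStaircase, staircase, Fin.val_rev]
      split_ifs <;> omega
    · refine coeffAt_X_mul_of_eq_zero ?_ P
      simp only [columnStaircase, staircase, Fin.val_rev]
      split_ifs <;> omega

theorem isAlternating_psum_one_pow_mul_alternant (k : ℕ) :
    IsAlternating (psum (Fin m) ℚ 1 ^ k * alternant (staircase m)) := by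
  rw [mul_comm]
  exact (isAlternating_alternant _).mul_isSymmetric
    ((symmetricSubalgebra (Fin m) ℚ).pow_mem (psum_isSymmetric _ _ 1) k)

theorem coeffAt_psum_one_pow_mul_alternant {k : ℕ} (hk : k ≤ m) :
    coeffAt (columnStaircase m k) (psum (Fin m) ℚ 1 ^ k * alternant (staircase m)) = 1 := by
  induction k with
  | zero =>
    have : columnStaircase m 0 = staircase m := by ext; simp [columnStaircase]
    rw [pow_zero, one_mul, this,
      coeffAt_alternant_of_strictAnti strictAnti_staircase strictAnti_staircase, if_pos rfl]
  | succ k ih =>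
    rw [pow_succ', mul_assoc,
      (isAlternating_psum_one_pow_mul_alternant k).coeffAt_psum_one_mul hk, ih (by omega)]

theorem columnStaircase_eq (m k : ℕ) :
    columnStaircase m k = staircase m + Set.indicator {i : Fin m | (i : ℕ) < k} 1 := by
  ext i
  simp [columnStaircase, Set.indicator_apply]

/-- A gap of `T` produces two equal exponents. -/
theorem antitone_mem_of_coeffAt_ne_zero {P : MvPolynomial (Fin m) ℚ} (hP : IsAlternating P)
    {T : Finset (Fin m)} (h : coeffAt (staircase m + Set.indicator T 1) P ≠ 0) :
    Antitone (· ∈ T) := by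
  cases m with
  | zero => exact fun i => i.elim0
  | succ m =>
    refine Fin.antitone_iff_succ_le.mpr fun i hsucc => ?_
    by_contra hi
    refine h (hP.coeffAt_eq_zero i.castSucc_lt_succ.ne ?_)
    have notMem : i.castSucc ∉ (T : Set (Fin (m + 1))) := hi
    have mem : i.succ ∈ (T : Set (Fin (m + 1))) := hsucc
    simp only [Pi.add_apply, staircase, Fin.val_rev, Set.indicator_of_notMem notMem,
      Set.indicator_of_mem mem, Pi.one_apply, Fin.val_castSucc, Fin.val_succ]
    omega

theorem coeffAt_psum_one_pow_card_mul_alternant (T : Finset (Fin m)) :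
    coeffAt (staircase m + Set.indicator T 1) (psum (Fin m) ℚ 1 ^ #T * alternant (staircase m))
      = if Antitone (· ∈ T) then 1 else 0 := by
  split_ifs with hT
  · have mem_iff (i : Fin m) : i ∈ T ↔ (i : ℕ) < #T := by
      simpa using (Fin.lt_card_filter_univ_iff_apply_of_imp (j := i) (· ∈ T) fun _ _ h => hT h).symm
    have : (T : Set (Fin m)) = {i : Fin m | (i : ℕ) < #T} := Set.ext mem_iff
    rw [this, ← columnStaircase_eq, coeffAt_psum_one_pow_mul_alternant (card_finset_fin_le T)]
  · exact not_imp_comm.mp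
      (antitone_mem_of_coeffAt_ne_zero (isAlternating_psum_one_pow_mul_alternant _)) hT

theorem sum_antitone_mem_eq_sum_range {M : Type*} [AddCommMonoid M] (f : ℕ → M) :
    (∑ T : Finset (Fin m) with Antitone (· ∈ T), f #T) = ∑ k ∈ range (m + 1), f k := by
  have card_initial {k : ℕ} (hk : k ≤ m) : #{i : Fin m | (i : ℕ) < k} = k := by
    rw [Fin.card_filter_val_lt, min_eq_right hk]
  refine sum_nbij' card (fun k => univ.filter fun i : Fin m => (i : ℕ) < k)
    (fun T _ => ?_) (fun k _ => ?_) (fun T hT => ?_)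
    (fun k hk => card_initial (by simpa [Nat.lt_succ_iff] using hk)) fun _ _ => rfl
  · simpa [Nat.lt_succ_iff] using card_finset_fin_le T
  · simp only [mem_filter, mem_univ, true_and]
    exact fun i j hij hj => lt_of_le_of_lt hij hj
  · ext i
    simpa using Fin.lt_card_filter_univ_iff_apply_of_imp (j := i) (· ∈ T) fun _ _ h =>
      (mem_filter.mp hT).2 h

theorem coeffAt_alternant_mul_prod_mul_prod_neg (T : Finset (Fin m)) :
    coeffAt (1 + staircase m)
        (alternant (staircase m) * ((∏ _i ∈ T, psum (Fin m) ℚ 1) * ∏ i ∈ Tᶜ, -X i))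
      = if Antitone (· ∈ T) then (-1) ^ (m - #T) else 0 := by
  have exponents_eq : 1 + staircase m
      = staircase m + Set.indicator T 1 + Set.indicator ↑Tᶜ 1 := by
    rw [add_assoc, coe_compl, Set.indicator_self_add_compl, add_comm]
  have : alternant (staircase m) * ((∏ _i ∈ T, psum (Fin m) ℚ 1) * ∏ i ∈ Tᶜ, -X i)
      = ((-1) ^ #Tᶜ : ℚ) • ((∏ i ∈ Tᶜ, X i)
        * (psum (Fin m) ℚ 1 ^ #T * alternant (staircase m))) := by
    rw [prod_const, prod_neg, smul_eq_C_mul]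
    simp only [map_pow, map_neg, map_one]
    ring
  rw [this, map_smul, smul_eq_mul, exponents_eq, coeffAt_prod_X_mul,
    coeffAt_psum_one_pow_card_mul_alternant, mul_ite, mul_one, mul_zero, card_compl,
    Fintype.card_fin]

theorem coeffAt_alternant_mul_prod_psum_sub (m : ℕ) :
    coeffAt (1 + staircase m) (alternant (staircase m) * ∏ i, (psum (Fin m) ℚ 1 - X i))
      = if Even m then 1 else 0 := by
  have sum_reflect := sum_range_reflect (fun k => (-1 : ℚ) ^ k) (m + 1)
  simp only [add_tsub_cancel_right] at sum_reflect
  simp only [sub_eq_add_neg, Fintype.prod_add, mul_sum, map_sum,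
    coeffAt_alternant_mul_prod_mul_prod_neg]
  rw [← sum_filter, sum_antitone_mem_eq_sum_range fun k => (-1 : ℚ) ^ (m - k), sum_reflect,
    neg_one_geom_sum]
  simp only [Nat.even_add_one, ite_not]

theorem fCD_zero_right (n : ℕ) : fCD n 0 = if Even n then (n ! : ℚ) else 0 := by
  have card_eq : Fintype.card (Fin (n + 0) ⊕ Fin n) = 2 * n + 0 := by
    rw [Fintype.card_sum, Fintype.card_fin, Fintype.card_fin, two_mul, add_right_comm]
  have restriction : IsRestriction (2 * n + 0) (XCoeff (genNet (n + 0) n)) _ :=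
    card_eq ▸ isRestriction_chromaticSymmPoly _
  have rowLen_eq_zero : rowLen (twoOne n 0) n = 0 := by simp [rowLen_twoOne_zero]
  have exponents_eq : rows n (twoOne n 0) + staircase n
      = 1 + staircase n + Set.indicator ((univ : Finset (Fin n)) : Set (Fin n)) 1 := by
    ext i
    simp only [rows, rowLen_twoOne_zero, i.isLt, if_true, coe_univ, Set.indicator_univ,
      Pi.add_apply, Pi.one_apply]
    omega
  rw [fCD, restriction.sCoeff_eq rowLen_eq_zero, exponents_eq, add_zero,
    chromaticSymmPoly_genNet, mul_smul_comm, map_smul, mul_left_comm, coeffAt_prod_X_mul,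
    coeffAt_alternant_mul_prod_psum_sub, smul_eq_mul, mul_ite, mul_one, mul_zero]

end CoefficientExtraction

/-- For `n ≥ 3`: `f(n,0) = n·(n-1)·f(n-2,0)`. -/
theorem fCD_two_step_recurrence (n : ℕ) (hn : 3 ≤ n) :
    fCD n 0 = (n : ℚ) * ((n : ℚ) - 1) * fCD (n - 2) 0 := by
  obtain ⟨k, rfl⟩ : ∃ k, n = k + 2 := ⟨n - 2, by omega⟩
  have even_iff : Even (k + 2) ↔ Even k := by simp [Nat.even_add]
  rw [Nat.add_sub_cancel, fCD_zero_right, fCD_zero_right, if_congr even_iff rfl rfl]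
  split_ifs
  · rw [Nat.factorial_succ, Nat.factorial_succ]
    push_cast
    ring
  · rw [mul_zero]
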